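/- Under hypotheses H(M), H(F), H(G), H(γ), H(Ψ), E ∈ X*, the smallness condition c_F > c_G‖γ‖^p, and assuming additionally that F is strictly monotone (so that the solution map S of Problem 2 is single-valued), the graph of the map Q(z,ξ) = {S(z,ξ)} × G(γz) is sequentially weakly closed in the following sense: if z_n, x_n ∈ K ∩ D(L) and ξ_n, η_n ∈ Y* satisfy x_n = S(z_n, ξ_n), η_n ∈ G(γz_n), z_n ⇀ z weakly in W, x_n ⇀ x weakly in W, ξ_n ⇀ ξ weakly in Y* and η_n ⇀ η weakly in Y*, then x = S(z, ξ) and η ∈ G(γz). -/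

import Mathlib

open Filter Topology Bornology Set

noncomputable section

/-- Weak convergence of a sequence in a normed space: convergence tested
against every continuous linear functional. -/
def WeakConv {V : Type*} [NormedAddCommGroup V] [NormedSpace ℝ V]
    (x : ℕ → V) (x₀ : V) : Prop :=
  ∀ f : V →L[ℝ] ℝ, Tendsto (fun n => f (x n)) atTop (𝓝 (f x₀))

/-- Weak-star convergence of a sequence of continuous linear functionals
(which coincides with weak convergence when the underlying space is reflexive). -/
def WeakStarConv {V : Type*} [NormedAddCommGroup V] [NormedSpace ℝ V]
    (f : ℕ → V →L[ℝ] ℝ) (f₀ : V →L[ℝ] ℝ) : Prop :=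
  ∀ v : V, Tendsto (fun n => f n v) atTop (𝓝 (f₀ v))

/-- Reflexivity of a real normed space, expressed via surjectivity of the
canonical embedding into the double dual. -/
def IsReflexiveSpace (V : Type*) [NormedAddCommGroup V] [NormedSpace ℝ V] : Prop :=
  Function.Surjective ⇑(NormedSpace.inclusionInDoubleDual ℝ V)

/-- Clarke generalized directional derivative of `J` at `u` in direction `v`. -/
def clarkeDD {V : Type*} [NormedAddCommGroup V] [NormedSpace ℝ V]
    (J : V → ℝ) (u v : V) : ℝ :=
  limsup (fun q : V × ℝ => (J (q.1 + q.2 • v) - J q.1) / q.2)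
    ((𝓝 u) ×ˢ (𝓝[>] (0 : ℝ)))

/-- Clarke generalized subdifferential of `J` at `u`. -/
def clarkeSub {V : Type*} [NormedAddCommGroup V] [NormedSpace ℝ V]
    (J : V → ℝ) (u : V) : Set (V →L[ℝ] ℝ) :=
  {g | ∀ v : V, g v ≤ clarkeDD J u v}

/-- The data of the evolution multivalued quasi-variational inequality:
spaces `X`, `Y`, the (unbounded) operator `L` with domain `DL`, the constraint
set `K`, the constraint map `M`, the operator `F`, the multivalued map `G`,
the trace operator `gam`, the bifunction `Psi`, the right-hand side `E`, and
the constants appearing in the hypotheses. -/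
structure QVISetting (X Y : Type*) [NormedAddCommGroup X] [NormedSpace ℝ X]
    [NormedAddCommGroup Y] [NormedSpace ℝ Y] where
  DL : Set X
  L : X → X →L[ℝ] ℝ
  K : Set X
  M : X → Set X
  F : X → X →L[ℝ] ℝ
  G : Y → Set (Y →L[ℝ] ℝ)
  gam : X →L[ℝ] Y
  Psi : X → X → ℝ
  E : X →L[ℝ] ℝ
  p : ℝ
  cF : ℝ
  dF : ℝ
  cG : ℝ
  dG : ℝ
  cPsi : ℝ
  dPsi : ℝ
  ePsi : ℝ
  beta : ℝ

namespace QVISetting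

variable {X Y : Type*} [NormedAddCommGroup X] [NormedSpace ℝ X]
  [NormedAddCommGroup Y] [NormedSpace ℝ Y] (S : QVISetting X Y)

/-- Weak convergence in `W = D(L)` equipped with the graph norm:
weak convergence in `X` together with weak convergence of `L xₙ` in `X*`. -/
def WConvW (x : ℕ → X) (x₀ : X) : Prop :=
  WeakConv x x₀ ∧ WeakStarConv (fun n => S.L (x n)) (S.L x₀)

/-- H(L): `L` is linear on its domain `DL`, densely defined, monotone, and
maximal monotone. -/
def HL : Prop :=
  (0 : X) ∈ S.DL ∧
  (∀ a ∈ S.DL, ∀ b ∈ S.DL, ∀ s t : ℝ,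
      s • a + t • b ∈ S.DL ∧ S.L (s • a + t • b) = s • S.L a + t • S.L b) ∧
  Dense S.DL ∧
  (∀ u ∈ S.DL, ∀ v ∈ S.DL, 0 ≤ (S.L u - S.L v) (u - v)) ∧
  (∀ (x : X) (xs : X →L[ℝ] ℝ),
      (∀ v ∈ S.DL, 0 ≤ (xs - S.L v) (x - v)) → x ∈ S.DL ∧ xs = S.L x)

/-- H(K): `K` is nonempty, closed and convex. -/
def HK : Prop := S.K.Nonempty ∧ IsClosed S.K ∧ Convex ℝ S.K

/-- H(M): `M` has nonempty closed convex values contained in `K`; `0` lies in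
the norm-interior of `⋂_{w ∈ K} M w`; `M` has a weakly closed graph with
respect to `L`; and the Mosco-type approximation property holds. -/
def HM : Prop :=
  (∀ z ∈ S.K, (S.M z).Nonempty ∧ IsClosed (S.M z) ∧ Convex ℝ (S.M z) ∧ S.M z ⊆ S.K) ∧
  (0 : X) ∈ interior (⋂ w ∈ S.K, S.M w) ∧
  (∀ (y x : ℕ → X) (y₀ x₀ : X), (∀ n, y n ∈ S.K) →
      (∀ n, x n ∈ S.M (y n) ∩ S.DL) →
      S.WConvW y y₀ → S.WConvW x x₀ → x₀ ∈ S.M y₀ ∩ S.DL) ∧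
  (∀ (y : ℕ → X) (y₀ : X), (∀ n, y n ∈ S.K) → S.WConvW y y₀ →
      ∀ x₀ ∈ S.M y₀ ∩ S.DL, ∃ x : ℕ → X,
        (∀ n, x n ∈ S.M (y n) ∩ S.DL) ∧ Tendsto x atTop (𝓝 x₀))

/-- H(F): `F` is bounded, monotone, hemicontinuous and `p`-coercive. -/
def HF : Prop :=
  (∀ B : Set X, IsBounded B → IsBounded (S.F '' B)) ∧
  (∀ u v : X, 0 ≤ (S.F u - S.F v) (u - v)) ∧
  (∀ u v w : X, Tendsto (fun t : ℝ => S.F (u + t • v) w) (𝓝 0) (𝓝 (S.F u w))) ∧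
  1 < S.p ∧ 0 < S.cF ∧ 0 ≤ S.dF ∧
  (∀ x : X, S.cF * ‖x‖ ^ S.p - S.dF ≤ S.F x x)

/-- H(G): `G` has nonempty closed convex values, sequentially strongly–weakly
closed graph, and satisfies the `(p-1)`-growth condition. -/
def HG : Prop :=
  (∀ z : Y, (S.G z).Nonempty ∧ IsClosed (S.G z) ∧ Convex ℝ (S.G z)) ∧
  (∀ (z : ℕ → Y) (z₀ : Y) (ξ : ℕ → Y →L[ℝ] ℝ) (ξ₀ : Y →L[ℝ] ℝ),
      Tendsto z atTop (𝓝 z₀) → (∀ n, ξ n ∈ S.G (z n)) →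
      WeakStarConv ξ ξ₀ → ξ₀ ∈ S.G z₀) ∧
  0 ≤ S.cG ∧ 0 ≤ S.dG ∧
  (∀ z : Y, ∀ ξ ∈ S.G z, ‖ξ‖ ≤ S.cG * ‖z‖ ^ (S.p - 1) + S.dG)

/-- H(γ): `gam` is compact on `W`: it maps weakly convergent sequences in `W`
to strongly convergent sequences in `Y`. -/
def Hgam : Prop :=
  ∀ (x : ℕ → X) (x₀ : X), S.WConvW x x₀ →
    Tendsto (fun n => S.gam (x n)) atTop (𝓝 (S.gam x₀))

/-- H(Ψ): conditions (i)–(iv) on the bifunction `Psi`. -/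
def HPsi : Prop :=
  (∀ x : X, ConvexOn ℝ Set.univ (S.Psi x) ∧ LowerSemicontinuous (S.Psi x)) ∧
  (∃ (η : ℝ) (b : X → X → X → ℝ), 0 < η ∧ η < S.p ∧
    (∀ a u v : X, 0 ≤ b a u v) ∧
    (∀ A B C : Set X, IsBounded A → IsBounded B → IsBounded C →
        ∃ Cb : ℝ, ∀ a ∈ A, ∀ u ∈ B, ∀ v ∈ C, b a u v ≤ Cb) ∧
    (∀ x y₁ y₂ : X, S.Psi x y₁ - S.Psi x y₂ ≤ b x y₁ y₂ * ‖y₁ - y₂‖ ^ η) ∧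
    (∀ B : Set X, IsBounded B → ∀ ε > (0 : ℝ), ∃ R : ℝ, ∀ z ∈ B, ∀ x : X,
        R ≤ ‖x‖ → b z 0 x / ‖x‖ ^ (S.p - η) ≤ ε)) ∧
  (∀ (w x y : ℕ → X) (w₀ x₀ y₀ : X),
      S.WConvW w w₀ → S.WConvW x x₀ → Tendsto y atTop (𝓝 y₀) →
      limsup (fun n => S.Psi (w n) (y n) - S.Psi (w n) (x n)) atTop ≤
        S.Psi w₀ y₀ - S.Psi w₀ x₀) ∧
  (∀ v : X, ∃ g : X →L[ℝ] ℝ, ∀ y : X, S.Psi v 0 + g y ≤ S.Psi v y) ∧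
  (0 ≤ S.ePsi ∧ ∀ v : X, |S.Psi v 0| ≤ S.ePsi) ∧
  (0 ≤ S.cPsi ∧ 0 ≤ S.dPsi ∧ 1 ≤ S.beta ∧ S.beta < S.p ∧
    ∀ v y : X, -S.cPsi * ‖y‖ ^ S.beta - S.dPsi ≤ S.Psi v y)

/-- The `(S₊)`-property of `F` with respect to `L`. -/
def SPlus : Prop :=
  ∀ (x : ℕ → X) (x₀ : X), S.WConvW x x₀ →
    limsup (fun n => S.F (x n) (x n - x₀)) atTop ≤ 0 →
    Tendsto x atTop (𝓝 x₀)

/-- Strict monotonicity of `F`. -/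
def StrictlyMonotoneF : Prop :=
  ∀ u v : X, u ≠ v → 0 < (S.F u - S.F v) (u - v)

/-- Solution set of Problem 1. -/
def Sol1 : Set X :=
  {x | x ∈ S.M x ∩ S.DL ∧ ∃ ξ ∈ S.G (S.gam x), ∀ y ∈ S.M x ∩ S.DL,
      S.Psi x x - S.Psi x y ≤
        S.L x (y - x) + S.F x (y - x) - S.E (y - x) + ξ (S.gam (y - x))}

/-- Solution set of Problem 2 with parameters `(z, ξ)`. -/
def Sol2 (z : X) (ξ : Y →L[ℝ] ℝ) : Set X :=
  {x | x ∈ S.M z ∩ S.DL ∧ ∀ y ∈ S.M z ∩ S.DL,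
      S.Psi z x - S.Psi z y ≤
        S.L x (y - x) + S.F x (y - x) - S.E (y - x) + ξ (S.gam (y - x))}

/-- Solution set of Problem 3 (with `G = ∂_C J ∘ γ`). -/
def Sol3 (J : Y → ℝ) : Set X :=
  {x | x ∈ S.M x ∩ S.DL ∧ ∃ ξ ∈ clarkeSub J (S.gam x), ∀ y ∈ S.M x ∩ S.DL,
      S.Psi x x - S.Psi x y ≤
        S.L x (y - x) + S.F x (y - x) - S.E (y - x) + ξ (S.gam (y - x))}

/-- Solution set of Problem 4 (quasi-variational–hemivariational inequality). -/
def Sol4 (J : Y → ℝ) : Set X :=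
  {x | x ∈ S.M x ∩ S.DL ∧ ∀ y ∈ S.M x ∩ S.DL,
      S.Psi x x - S.Psi x y ≤
        S.L x (y - x) + S.F x (y - x) - S.E (y - x) +
          clarkeDD J (S.gam x) (S.gam (y - x))}

/-- Solution set of Problem 5 with a real-valued convex function `Φ`
independent of the first variable. -/
def Sol5 (Φ : X → ℝ) : Set X :=
  {x | x ∈ S.M x ∩ S.DL ∧ ∃ ξ ∈ S.G (S.gam x), ∀ y ∈ S.M x ∩ S.DL,
      Φ x - Φ y ≤
        S.L x (y - x) + S.F x (y - x) - S.E (y - x) + ξ (S.gam (y - x))}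

/-- Solution set of Problem 5 with an extended-real-valued function `Φ`. -/
def Sol5E (Φ : X → EReal) : Set X :=
  {x | x ∈ S.M x ∩ S.DL ∧ ∃ ξ ∈ S.G (S.gam x), ∀ y ∈ S.M x ∩ S.DL,
      Φ x ≤
        ((S.L x (y - x) + S.F x (y - x) - S.E (y - x) + ξ (S.gam (y - x)) : ℝ) : EReal)
          + Φ y}

/-- Sequential weak compactness of a set in `W`. -/
def SeqWeakCompactW (A : Set X) : Prop :=
  ∀ x : ℕ → X, (∀ n, x n ∈ A) →
    ∃ x₀ ∈ A, ∃ φ : ℕ → ℕ, StrictMono φ ∧ S.WConvW (x ∘ φ) x₀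

end QVISetting

theorem aux_bdd_of_weakStar {V : Type*} [NormedAddCommGroup V] [NormedSpace ℝ V]
    [CompleteSpace V] (f : ℕ → V →L[ℝ] ℝ) (f₀ : V →L[ℝ] ℝ) (h : WeakStarConv f f₀) :
    ∃ C, ∀ n, ‖f n‖ ≤ C := by
  apply banach_steinhaus
  intro v
  obtain ⟨C, hC⟩ := (Metric.isBounded_range_of_tendsto _ (h v)).exists_norm_le
  exact ⟨C, fun n => hC _ ⟨n, rfl⟩⟩

theorem aux_bdd_of_weak {V : Type*} [NormedAddCommGroup V] [NormedSpace ℝ V]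
    (x : ℕ → V) (x₀ : V) (h : WeakConv x x₀) :
    ∃ C, ∀ n, ‖x n‖ ≤ C := by
  obtain ⟨C, hC⟩ := aux_bdd_of_weakStar (V := V →L[ℝ] ℝ)
    (fun n => NormedSpace.inclusionInDoubleDual ℝ V (x n))
    (NormedSpace.inclusionInDoubleDual ℝ V x₀) (fun f => h f)
  refine ⟨C, fun n => ?_⟩
  have := (NormedSpace.inclusionInDoubleDualLi ℝ (E := V)).norm_map (x n)
  rw [← this]
  exact hC n

theorem aux_pairing {V : Type*} [NormedAddCommGroup V] [NormedSpace ℝ V]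
    [CompleteSpace V] (f : ℕ → V →L[ℝ] ℝ) (f₀ : V →L[ℝ] ℝ) (h : WeakStarConv f f₀)
    (v : ℕ → V) (v₀ : V) (hv : Tendsto v atTop (𝓝 v₀)) :
    Tendsto (fun n => f n (v n)) atTop (𝓝 (f₀ v₀)) := by
  obtain ⟨C, hC⟩ := aux_bdd_of_weakStar f f₀ h
  have h1 : Tendsto (fun n => f n (v n - v₀)) atTop (𝓝 0) := by
    apply squeeze_zero_norm (a := fun n => C * ‖v n - v₀‖)
    · intro n
      exact (f n).le_of_opNorm_le (hC n) _
    · have := (tendsto_iff_norm_sub_tendsto_zero.1 hv).const_mul C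
      simpa using this
  have := h1.add (h v₀)
  simpa using this

theorem aux_mem_of_weak {V : Type*} [NormedAddCommGroup V] [NormedSpace ℝ V]
    (K : Set V) (hc : IsClosed K) (hK : Convex ℝ K)
    (x : ℕ → V) (x₀ : V) (hx : ∀ n, x n ∈ K) (h : WeakConv x x₀) : x₀ ∈ K := by
  by_contra hn
  obtain ⟨f, u, h1, h2⟩ := geometric_hahn_banach_point_closed hK hc hn
  have : u ≤ f x₀ := ge_of_tendsto' (h f) (fun n => (h2 _ (hx n)).le)
  linarith

/-- under the hypotheses of Statement 0 and strict monotonicity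
of `F`, the graph of `Q(z, ξ) = {S(z, ξ)} × G(γ z)` is sequentially weakly
closed. -/
theorem statement6 {X Y : Type*} [NormedAddCommGroup X] [NormedSpace ℝ X]
    [NormedAddCommGroup Y] [NormedSpace ℝ Y] [CompleteSpace X] [CompleteSpace Y]
    [TopologicalSpace.SeparableSpace X] [TopologicalSpace.SeparableSpace Y]
    (hreflX : IsReflexiveSpace X) (hreflY : IsReflexiveSpace Y)
    (S : QVISetting X Y)
    (hK : S.HK) (hL : S.HL) (hM : S.HM) (hF : S.HF) (hG : S.HG)
    (hgam : S.Hgam) (hPsi : S.HPsi)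
    (hsmall : S.cG * ‖S.gam‖ ^ S.p < S.cF)
    (hstrict : S.StrictlyMonotoneF)
    (Ssol : X → (Y →L[ℝ] ℝ) → X)
    (hSsol : ∀ z ∈ S.K, ∀ ξ : Y →L[ℝ] ℝ, S.Sol2 z ξ = {Ssol z ξ}) :
    ∀ (z x : ℕ → X) (ξ ηs : ℕ → Y →L[ℝ] ℝ) (z₀ x₀ : X) (ξ₀ η₀ : Y →L[ℝ] ℝ),
      (∀ n, z n ∈ S.K ∩ S.DL) → (∀ n, x n ∈ S.K ∩ S.DL) →
      (∀ n, x n = Ssol (z n) (ξ n)) → (∀ n, ηs n ∈ S.G (S.gam (z n))) →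
      S.WConvW z z₀ → S.WConvW x x₀ →
      WeakStarConv ξ ξ₀ → WeakStarConv ηs η₀ →
      x₀ ∈ S.Sol2 z₀ ξ₀ ∧ η₀ ∈ S.G (S.gam z₀) := by
  intro z x ξ ηs z₀ x₀ ξ₀ η₀ hz hx hxS hη hzc hxc hξ hηc
  refine ⟨?_, hG.2.1 _ _ ηs η₀ (hgam z z₀ hzc) hη hηc⟩
  have hsol : ∀ n, x n ∈ S.Sol2 (z n) (ξ n) := by
    intro n
    rw [hSsol (z n) (hz n).1 (ξ n), hxS n]
    rfl
  have hzK : ∀ n, z n ∈ S.K := fun n => (hz n).1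
  have hz₀ : z₀ ∈ S.K := aux_mem_of_weak S.K hK.2.1 hK.2.2 z z₀ hzK hzc.1
  have hx₀ : x₀ ∈ S.M z₀ ∩ S.DL := hM.2.2.1 z x z₀ x₀ hzK (fun n => (hsol n).1) hzc hxc
  obtain ⟨Cz, hCz⟩ := aux_bdd_of_weak z z₀ hzc.1
  obtain ⟨Cx, hCx⟩ := aux_bdd_of_weak x x₀ hxc.1
  obtain ⟨hFb, hFm, hFh, -⟩ := hF
  obtain ⟨hPc, ⟨η, b, hη0, -, hb0, hbb, hbP, -⟩, hPl, -⟩ := hPsi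
  obtain ⟨-, hLlin, -, hLmono, -⟩ := hL
  have bz : IsBounded (Set.range z) :=
    isBounded_iff_forall_norm_le.2 ⟨Cz, by rintro _ ⟨n, rfl⟩; exact hCz n⟩
  have bx : IsBounded (Set.range x) :=
    isBounded_iff_forall_norm_le.2 ⟨Cx, by rintro _ ⟨n, rfl⟩; exact hCx n⟩
  obtain ⟨CF, hCF⟩ := (hFb _ bx).exists_norm_le
  -- Minty form of the limit inequality
  have minty : ∀ y ∈ S.M z₀ ∩ S.DL, S.Psi z₀ x₀ - S.Psi z₀ y ≤
      S.L x₀ (y - x₀) + S.F y (y - x₀) - S.E (y - x₀) + ξ₀ (S.gam (y - x₀)) := by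
    intro y hy
    obtain ⟨w, hw, hwy⟩ := hM.2.2.2 z z₀ hzK hzc y hy
    have bw : IsBounded (Set.range w) := Metric.isBounded_range_of_tendsto _ hwy
    obtain ⟨Cy, hCy⟩ := bw.exists_norm_le
    obtain ⟨Cb, hCb⟩ := hbb _ _ _ bz bw bx
    have hLlim : Tendsto (fun n => S.L (x n) (w n - x₀) + S.L x₀ (x₀ - x n)) atTop
        (𝓝 (S.L x₀ (y - x₀) + 0)) := by
      refine (aux_pairing _ _ hxc.2 _ _ (hwy.sub_const x₀)).add ?_
      have := (hxc.1 (S.L x₀)).const_sub (S.L x₀ x₀)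
      simpa using this
    have hFlim : Tendsto (fun n => CF * ‖w n - y‖ + S.F y (y - x n)) atTop
        (𝓝 (0 + S.F y (y - x₀))) := by
      refine Tendsto.add ?_ ?_
      · have := (tendsto_iff_norm_sub_tendsto_zero.1 hwy).const_mul CF
        simpa using this
      · have := (hxc.1 (S.F y)).const_sub (S.F y y)
        simpa using this
    have hElim : Tendsto (fun n => S.E (w n - x n)) atTop (𝓝 (S.E (y - x₀))) := by
      have := ((S.E.continuous.tendsto y).comp hwy).sub (hxc.1 S.E)
      simpa using this
    have hξlim : Tendsto (fun n => ξ n (S.gam (w n - x n))) atTop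
        (𝓝 (ξ₀ (S.gam (y - x₀)))) := by
      refine aux_pairing _ _ hξ _ _ ?_
      have := ((S.gam.continuous.tendsto y).comp hwy).sub (hgam x x₀ hxc)
      simpa using this
    have hlim := ((hLlim.add hFlim).sub hElim).add hξlim
    have hle : ∀ n, S.Psi (z n) (x n) - S.Psi (z n) (w n) ≤
        S.L (x n) (w n - x₀) + S.L x₀ (x₀ - x n) + (CF * ‖w n - y‖ + S.F y (y - x n))
          - S.E (w n - x n) + ξ n (S.gam (w n - x n)) := by
      intro n
      have h0 := (hsol n).2 (w n) (hw n)
      have h1 := hLmono (x n) (hx n).2 x₀ hx₀.2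
      have h2 := hFm (x n) y
      have h3 : S.F (x n) (w n - y) ≤ CF * ‖w n - y‖ :=
        (le_abs_self _).trans ((S.F (x n)).le_of_opNorm_le (hCF _ ⟨x n, ⟨n, rfl⟩, rfl⟩) _)
      simp only [_root_.sub_apply, map_sub] at h0 h1 h2 h3 ⊢
      linarith
    have hbd : ∀ n, S.Psi (z n) (w n) - S.Psi (z n) (x n) ≤ |Cb| * (Cy + Cx) ^ η := by
      intro n
      refine (hbP (z n) (w n) (x n)).trans ?_
      have h1 : ‖w n - x n‖ ≤ Cy + Cx :=
        (norm_sub_le _ _).trans (add_le_add (hCy _ ⟨n, rfl⟩) (hCx n))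
      have h2 := hCb (z n) ⟨n, rfl⟩ (w n) ⟨n, rfl⟩ (x n) ⟨n, rfl⟩
      exact mul_le_mul (h2.trans (le_abs_self _))
        (Real.rpow_le_rpow (norm_nonneg _) h1 hη0.le) (by positivity) (abs_nonneg _)
    have hls := hPl z x w z₀ x₀ y hzc hxc hwy
    refine le_of_forall_pos_le_add fun ε hε => ?_
    have hev := hlim.eventually (gt_mem_nhds (lt_add_of_pos_right _ hε))
    have hfin : -(S.L x₀ (y - x₀) + 0 + (0 + S.F y (y - x₀)) - S.E (y - x₀)
        + ξ₀ (S.gam (y - x₀)) + ε) ≤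
        limsup (fun n => S.Psi (z n) (w n) - S.Psi (z n) (x n)) atTop := by
      refine le_limsup_of_frequently_le (Eventually.frequently ?_)
        ⟨_, eventually_map.2 (Eventually.of_forall hbd)⟩
      filter_upwards [hev] with n hn
      have := hle n
      linarith
    linarith
  refine ⟨hx₀, fun y hy => ?_⟩
  have hconv := (hM.1 z₀ hz₀).2.2.1
  have key : ∀ t : ℝ, 0 < t → t ≤ 1 → S.Psi z₀ x₀ - S.Psi z₀ y ≤
      S.L x₀ (y - x₀) + S.F (x₀ + t • (y - x₀)) (y - x₀) - S.E (y - x₀)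
        + ξ₀ (S.gam (y - x₀)) := by
    intro t ht ht1
    have hyt : x₀ + t • (y - x₀) = (1 - t) • x₀ + t • y := by
      rw [smul_sub, sub_smul, one_smul]; abel
    have hmem : x₀ + t • (y - x₀) ∈ S.M z₀ ∩ S.DL := by
      rw [hyt]
      exact ⟨hconv hx₀.1 hy.1 (by linarith) ht.le (by ring),
        (hLlin x₀ hx₀.2 y hy.2 _ _).1⟩
    have h1 := minty _ hmem
    have h2 := (hPc z₀).1.2 (mem_univ x₀) (mem_univ y) (sub_nonneg.2 ht1) ht.le (by ring)
    rw [← hyt] at h2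
    simp only [smul_eq_mul] at h2
    rw [add_sub_cancel_left] at h1
    simp only [map_smul, smul_eq_mul] at h1
    refine le_of_mul_le_mul_left ?_ ht
    linarith
  have hT : Tendsto (fun t : ℝ => S.L x₀ (y - x₀) + S.F (x₀ + t • (y - x₀)) (y - x₀)
      - S.E (y - x₀) + ξ₀ (S.gam (y - x₀))) (𝓝[>] 0)
      (𝓝 (S.L x₀ (y - x₀) + S.F x₀ (y - x₀) - S.E (y - x₀) + ξ₀ (S.gam (y - x₀)))) :=
    ((((hFh x₀ (y - x₀) (y - x₀)).mono_left nhdsWithin_le_nhds).const_add _).sub_const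
      _).add_const _
  refine ge_of_tendsto hT ?_
  filter_upwards [Ioc_mem_nhdsGT (zero_lt_one' ℝ)] with t ht
  exact key t ht.1 ht.2
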